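/- For every real y, E[(T/p)·1{Y ≤ y}] = F₁(y) and E[((1−T)/(1−p))·1{Y ≤ y}] = F₀(y); that is, the inverse-propensity weighted indicator of the observed outcome is an unbiased representation of the distribution function of each potential outcome. -/

import Mathlib

open MeasureTheory ProbabilityTheory

/-!
Taking conditional expectations given `m` turns the inverse weight `1_{A ∩ B} / P(B | m)` into
`P(A | m) P(B | m) / P(B | m) = P(A | m)` when `A` and `B` are conditionally independent, and
`P(A | m)` integrates to `P(A)`. The weight need not be bounded, so the computation is done with
the Lebesgue integral, where `m`-measurable factors pull out without integrability conditions.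
Each potential outcome is the case where `B` is the event that its treatment is received and `A`
the event that it lies in a given set: on `B` it is the outcome that is observed.
-/

open scoped ENNReal

section ConditionalLExpectation

variable {Ω : Type*} {m mΩ : MeasurableSpace Ω} {μ : Measure Ω}

theorem lintegral_mul_condLExp (hm : m ≤ mΩ) [SigmaFinite (μ.trim hm)] {f g : Ω → ℝ≥0∞}
    (hf : AEMeasurable f μ) (hg : Measurable[m] g) :
    ∫⁻ ω, g ω * μ⁻[f | m] ω ∂μ = ∫⁻ ω, g ω * f ω ∂μ := by
  have trim_eq : (μ.withDensity μ⁻[f | m]).trim hm = (μ.withDensity f).trim hm := by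
    refine @Measure.ext _ m _ _ fun s hs ↦ ?_
    rw [trim_measurableSet_eq hm hs, trim_measurableSet_eq hm hs, withDensity_apply _ (hm s hs),
      withDensity_apply _ (hm s hs), setLIntegral_condLExp hm μ f hs]
  have lintegral_withDensity {h : Ω → ℝ≥0∞} (hh : AEMeasurable h μ) :
      ∫⁻ ω, g ω ∂((μ.withDensity h).trim hm) = ∫⁻ ω, g ω * h ω ∂μ := by
    rw [lintegral_trim hm hg,
      lintegral_withDensity_eq_lintegral_mul₀ hh (hg.mono hm le_rfl).aemeasurable]
    simp only [Pi.mul_apply, mul_comm]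
  rw [← lintegral_withDensity (measurable_condLExp' m μ f).aemeasurable, trim_eq,
    lintegral_withDensity hf]

theorem condLExp_indicator_one_ae_eq_ofReal [IsFiniteMeasure μ] {A : Set Ω}
    (hA : MeasurableSet A) :
    μ⁻[A.indicator 1 | m] =ᵐ[μ] fun ω ↦ ENNReal.ofReal ((μ⟦A | m⟧) ω) := by
  have ofReal_indicator :
      (fun ω ↦ ENNReal.ofReal (A.indicator (fun _ ↦ (1 : ℝ)) ω)) = A.indicator 1 := by
    funext ω
    by_cases hω : ω ∈ A <;> simp [hω]
  rw [← ofReal_indicator]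
  exact condLExp_ofReal m ((integrable_const 1).indicator hA)
    (.of_forall fun _ ↦ Set.indicator_nonneg (fun _ _ ↦ zero_le_one) _)

end ConditionalLExpectation

section InverseProbabilityWeighting

variable {Ω : Type*} {m mΩ : MeasurableSpace Ω} [StandardBorelSpace Ω] {hm : m ≤ mΩ}
  {μ : Measure Ω} [IsFiniteMeasure μ] {A B : Set Ω}

theorem condLExp_inter_ae_eq_mul_of_condIndepSet (hA : MeasurableSet A) (hB : MeasurableSet B)
    (hAB : CondIndepSet m hm A B μ) :
    μ⁻[(A ∩ B).indicator 1 | m] =ᵐ[μ] μ⁻[A.indicator 1 | m] * μ⁻[B.indicator 1 | m] := by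
  filter_upwards [(condIndepSet_iff m hm A B hA hB μ).mp hAB,
    condLExp_indicator_one_ae_eq_ofReal (m := m) (hA.inter hB),
    condLExp_indicator_one_ae_eq_ofReal (m := m) hA,
    condLExp_indicator_one_ae_eq_ofReal (m := m) hB,
    condExp_nonneg (m := m) (μ := μ) (f := A.indicator fun _ ↦ (1 : ℝ))
      (.of_forall fun _ ↦ Set.indicator_nonneg (fun _ _ ↦ zero_le_one) _)]
    with ω h_mul h_inter h_A h_B h_nonneg
  rw [Pi.mul_apply, h_inter, h_A, h_B, ← ENNReal.ofReal_mul h_nonneg, h_mul, Pi.mul_apply]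

theorem setLIntegral_inter_inv_condLExp (hA : MeasurableSet A) (hB : MeasurableSet B)
    (hAB : CondIndepSet m hm A B μ) (hB_pos : ∀ᵐ ω ∂μ, μ⁻[B.indicator 1 | m] ω ≠ 0) :
    ∫⁻ ω in A ∩ B, (μ⁻[B.indicator 1 | m] ω)⁻¹ ∂μ = μ A := by
  have hB_finite : ∫⁻ ω, B.indicator 1 ω ∂μ ≠ ∞ := by
    simp [lintegral_indicator_one hB]
  calc ∫⁻ ω in A ∩ B, (μ⁻[B.indicator 1 | m] ω)⁻¹ ∂μ
      = ∫⁻ ω, (μ⁻[B.indicator 1 | m] ω)⁻¹ * (A ∩ B).indicator 1 ω ∂μ := by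
        rw [← lintegral_indicator (hA.inter hB)]
        congr 1 with ω
        simp [Set.indicator]
    _ = ∫⁻ ω, (μ⁻[B.indicator 1 | m] ω)⁻¹ * μ⁻[(A ∩ B).indicator 1 | m] ω ∂μ :=
        (lintegral_mul_condLExp hm (measurable_one.indicator (hA.inter hB)).aemeasurable
          (measurable_condLExp m μ _).inv).symm
    _ = ∫⁻ ω, μ⁻[A.indicator 1 | m] ω ∂μ := by
        refine lintegral_congr_ae ?_
        filter_upwards [condLExp_inter_ae_eq_mul_of_condIndepSet hA hB hAB, hB_pos,
          condLExp_ne_top hB_finite] with ω h_mul h_pos h_finite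
        rw [h_mul, Pi.mul_apply, mul_left_comm, ENNReal.inv_mul_cancel h_pos h_finite, mul_one]
    _ = μ A := by rw [lintegral_condLExp hm, lintegral_indicator_one hA]

theorem setIntegral_inter_inv_condProb (hA : MeasurableSet A) (hB : MeasurableSet B)
    (hAB : CondIndepSet m hm A B μ) {e : Ω → ℝ} (he : e =ᵐ[μ] μ⟦B | m⟧)
    (he_pos : ∀ᵐ ω ∂μ, 0 < e ω) :
    ∫ ω in A ∩ B, (e ω)⁻¹ ∂μ = μ.real A := by
  have ofReal_e : ∀ᵐ ω ∂μ, ENNReal.ofReal (e ω) = μ⁻[B.indicator 1 | m] ω := by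
    filter_upwards [he, condLExp_indicator_one_ae_eq_ofReal (m := m) hB] with ω h_e h_B
    rw [h_e, h_B]
  have condLExp_ne_zero : ∀ᵐ ω ∂μ, μ⁻[B.indicator 1 | m] ω ≠ 0 := by
    filter_upwards [ofReal_e, he_pos] with ω h_e h_pos
    rw [← h_e]
    exact (ENNReal.ofReal_pos.mpr h_pos).ne'
  have he_meas : AEMeasurable e μ :=
    (stronglyMeasurable_condExp.mono hm).measurable.aemeasurable.congr he.symm
  rw [integral_eq_lintegral_of_nonneg_ae
      (ae_restrict_of_ae (he_pos.mono fun _ h ↦ (inv_pos.mpr h).le))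
      he_meas.inv.restrict.aestronglyMeasurable,
    measureReal_def, ← setLIntegral_inter_inv_condLExp hA hB hAB condLExp_ne_zero]
  congr 1
  refine lintegral_congr_ae (ae_restrict_of_ae ?_)
  filter_upwards [ofReal_e, he_pos] with ω h_e h_pos
  rw [ENNReal.ofReal_inv_of_pos h_pos, h_e]

end InverseProbabilityWeighting

section PotentialOutcomes

variable {Ω 𝒴 : Type*} {m mΩ : MeasurableSpace Ω} [StandardBorelSpace Ω] [MeasurableSpace 𝒴]
  {hm : m ≤ mΩ} {μ : Measure Ω} [IsFiniteMeasure μ] {T p : Ω → ℝ} {Y : Ω → 𝒴} {S : Set 𝒴}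

theorem integral_inversePropensityWeighted_indicator {V : Ω → 𝒴} (hT : Measurable T)
    (hV : Measurable V) (hT01 : ∀ ω, T ω = 0 ∨ T ω = 1) (hYV : ∀ ω, T ω = 1 → Y ω = V ω)
    (hp : p =ᵐ[μ] μ[T | m]) (hp_pos : ∀ᵐ ω ∂μ, 0 < p ω) (hVT : CondIndepFun m hm V T μ)
    (hS : MeasurableSet S) :
    ∫ ω, T ω / p ω * S.indicator 1 (Y ω) ∂μ = μ.real (V ⁻¹' S) := by
  have hB : MeasurableSet (T ⁻¹' {1}) := hT (measurableSet_singleton 1)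
  have T_eq_indicator : T = (T ⁻¹' {1}).indicator fun _ ↦ 1 := by
    funext ω
    rcases hT01 ω with h | h <;> simp [h]
  have weighted_eq : (fun ω ↦ T ω / p ω * S.indicator 1 (Y ω)) =
      (V ⁻¹' S ∩ T ⁻¹' {1}).indicator fun ω ↦ (p ω)⁻¹ := by
    funext ω
    rcases hT01 ω with h | h
    · simp [h]
    · by_cases hVS : V ω ∈ S <;> simp [h, hYV ω h, hVS]
  have hVT_set : CondIndepSet m hm (V ⁻¹' S) (T ⁻¹' {1}) μ :=
    (condIndepFun_iff_condIndepSet_preimage hV hT).mp hVT S {1} hS (measurableSet_singleton 1)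
  rw [weighted_eq, integral_indicator ((hV hS).inter hB)]
  exact setIntegral_inter_inv_condProb (hV hS) hB hVT_set (T_eq_indicator ▸ hp) hp_pos

theorem stmt_0_general {Y1 Y0 : Ω → 𝒴} (hT : Measurable T) (hY1 : Measurable Y1)
    (hY0 : Measurable Y0) (hT01 : ∀ ω, T ω = 0 ∨ T ω = 1) (hYY1 : ∀ ω, T ω = 1 → Y ω = Y1 ω)
    (hYY0 : ∀ ω, T ω = 0 → Y ω = Y0 ω) (hp : p =ᵐ[μ] μ[T | m])
    (hp_mem : ∀ᵐ ω ∂μ, p ω ∈ Set.Ioo 0 1) (hY1T : CondIndepFun m hm Y1 T μ)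
    (hY0T : CondIndepFun m hm Y0 T μ) (hS : MeasurableSet S) :
    ∫ ω, T ω / p ω * S.indicator 1 (Y ω) ∂μ = μ.real (Y1 ⁻¹' S) ∧
    ∫ ω, (1 - T ω) / (1 - p ω) * S.indicator 1 (Y ω) ∂μ = μ.real (Y0 ⁻¹' S) := by
  have hT_int : Integrable T μ :=
    .of_bound hT.aestronglyMeasurable 1 <| .of_forall fun ω ↦ by
      rcases hT01 ω with h | h <;> simp [h]
  have one_sub_p : (fun ω ↦ 1 - p ω) =ᵐ[μ] μ[fun ω ↦ 1 - T ω | m] := by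
    filter_upwards [hp, condExp_sub (integrable_const 1) hT_int m] with ω h_p h_sub
    rw [h_p, ← Pi.sub_def, h_sub, Pi.sub_apply, condExp_const hm]
  have one_sub_T_zero_or_one (ω : Ω) : 1 - T ω = 0 ∨ 1 - T ω = 1 := by
    rcases hT01 ω with h | h <;> simp [h]
  have hY0_one_sub_T : CondIndepFun m hm Y0 (fun ω ↦ 1 - T ω) μ :=
    hY0T.comp measurable_id (measurable_const.sub measurable_id)
  exact ⟨integral_inversePropensityWeighted_indicator hT hY1 hT01 hYY1 hp
      (hp_mem.mono fun _ h ↦ h.1) hY1T hS,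
    integral_inversePropensityWeighted_indicator (measurable_const.sub hT) hY0
      one_sub_T_zero_or_one (fun ω h ↦ hYY0 ω (by linarith)) one_sub_p
      (hp_mem.mono fun _ h ↦ sub_pos.mpr h.2) hY0_one_sub_T hS⟩

end PotentialOutcomes

/-- Under strong ignorability, the inverse-propensity weighted indicator of the
observed outcome is an unbiased representation of the distribution function of each potential
outcome: for every real `y`, `E[(T/p)·1{Y ≤ y}] = F₁(y)` and `E[((1−T)/(1−p))·1{Y ≤ y}] = F₀(y)`. -/
theorem stmt_0
    {Ω : Type*} [MeasurableSpace Ω] [StandardBorelSpace Ω]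
    {𝒳 : Type*} [MeasurableSpace 𝒳] [StandardBorelSpace 𝒳]
    (μ : Measure Ω) [IsProbabilityMeasure μ]
    (X : Ω → 𝒳) (T : Ω → ℝ) (Y1 Y0 : Ω → ℝ)
    (hX : Measurable X) (hT : Measurable T) (hY1 : Measurable Y1) (hY0 : Measurable Y0)
    (hT01 : ∀ ω, T ω = 0 ∨ T ω = 1)
    (Y : Ω → ℝ) (hY : ∀ ω, Y ω = T ω * Y1 ω + (1 - T ω) * Y0 ω)
    (p : Ω → ℝ)
    (hp : p =ᵐ[μ] μ[T | MeasurableSpace.comap X inferInstance])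
    (δ : ℝ) (hδ : δ ∈ Set.Ioo (0 : ℝ) (1/2))
    (hpδ : ∀ᵐ ω ∂μ, δ ≤ p ω ∧ p ω ≤ 1 - δ)
    (hindep : CondIndepFun (MeasurableSpace.comap X inferInstance) hX.comap_le
      (fun ω => (Y1 ω, Y0 ω)) T μ)
    (y : ℝ) :
    (∫ ω, (T ω / p ω) * (if Y ω ≤ y then (1 : ℝ) else 0) ∂μ)
        = (μ {ω | Y1 ω ≤ y}).toReal ∧
    (∫ ω, ((1 - T ω) / (1 - p ω)) * (if Y ω ≤ y then (1 : ℝ) else 0) ∂μ)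
        = (μ {ω | Y0 ω ≤ y}).toReal := by
  have overlap : ∀ᵐ ω ∂μ, p ω ∈ Set.Ioo 0 1 :=
    hpδ.mono fun ω h ↦ ⟨hδ.1.trans_le h.1, by linarith [h.2, hδ.1]⟩
  simpa [Set.indicator_apply, Set.preimage, measureReal_def] using
    stmt_0_general (S := Set.Iic y) hT hY1 hY0 hT01 (fun ω h ↦ by simp [hY, h])
      (fun ω h ↦ by simp [hY, h]) hp overlap (hindep.comp measurable_fst measurable_id)
      (hindep.comp measurable_snd measurable_id) measurableSet_Iic
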